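/- Let n ≥ 1, ε = (−,…,−), and k ∈ {1,…,n}. Define a map f on good-labeled strand diagrams with k strands as follows: given a strand diagram d with chords labeled bijectively by {1,…,k} via a good labeling, write c(i_ℓ, j_ℓ) for the chord with label ℓ (where i_ℓ < j_ℓ), and set π_1 equal to the partition of {1,…,n+1} into singletons and, for s = 1,…,k, let π_{s+1} be obtained from π_s by merging the block containing i_s+1 with the block containing j_s+1; put f(d, labeling) = (π_1, π_2, …, π_{k+1}). Then f is a bijection from the set of good-labeled strand diagrams with k strands onto the set of tuples (π_1, …, π_{k+1}) of noncrossing partitions of {1,…,n+1} such that π_1 is the partition into singletons and, for each j ≥ 2, π_j is obtained from π_{j−1} by replacing two distinct blocks B, B′ of π_{j−1} by their union B ∪ B′. In particular, for k = n this is a bijection between good-labeled strand diagrams with n strands and maximal chains in the lattice of noncrossing partitions of {1,…,n+1}. -/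

import Mathlib

namespace ESPaper

/-- The chords `c = {c.1, c.2}` and `d = {d.1, d.2}` (with `c.1 < c.2`, `d.1 < d.2`) cross. -/
def Crosses (ε : ℕ → Bool) (c d : ℕ × ℕ) : Prop :=
  (c.1 < d.1 ∧ d.1 < c.2 ∧ c.2 < d.2 ∧ ε d.1 = ε c.2) ∨
  (d.1 < c.1 ∧ c.1 < d.2 ∧ d.2 < c.2 ∧ ε c.1 = ε d.2) ∨
  (c.1 < d.1 ∧ d.1 < d.2 ∧ d.2 < c.2 ∧ ε d.1 ≠ ε d.2) ∨
  (d.1 < c.1 ∧ c.1 < c.2 ∧ c.2 < d.2 ∧ ε c.1 ≠ ε c.2)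

/-- The chords `c` and `d` share an endpoint. -/
def SharesEndpoint (c d : ℕ × ℕ) : Prop :=
  c.1 = d.1 ∨ c.1 = d.2 ∨ c.2 = d.1 ∨ c.2 = d.2

/-- The chord `c` is clockwise from the chord `d` (chords written with `c.1 < c.2`, `d.1 < d.2`). -/
def Cw (ε : ℕ → Bool) (c d : ℕ × ℕ) : Prop :=
  (c.2 = d.1 ∧ ε c.2 = true) ∨
  (d.2 = c.1 ∧ ε c.1 = false) ∨
  (c.1 = d.1 ∧ ((c.2 < d.2 ∧ ε c.2 = false) ∨ (d.2 < c.2 ∧ ε d.2 = true))) ∨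
  (c.2 = d.2 ∧ ((c.1 < d.1 ∧ ε d.1 = false) ∨ (d.1 < c.1 ∧ ε c.1 = true)))

/-- The graph on `{0,…,n} ⊆ ℕ` determined by a finite set of chords. -/
def chordGraph (d : Finset (ℕ × ℕ)) : SimpleGraph ℕ :=
  SimpleGraph.fromEdgeSet {e : Sym2 ℕ | ∃ c ∈ d, e = s(c.1, c.2)}

/-- The graph on `{0,…,n} ⊆ ℕ` determined by a family of chords. -/
def chordGraphF {k : ℕ} (c : Fin k → ℕ × ℕ) : SimpleGraph ℕ :=
  SimpleGraph.fromEdgeSet {e : Sym2 ℕ | ∃ a : Fin k, e = s((c a).1, (c a).2)}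

/-- `d` is a strand diagram on `S_{n,ε}`: valid pairwise-noncrossing chords forming a forest. -/
def IsDiagram (n : ℕ) (ε : ℕ → Bool) (d : Finset (ℕ × ℕ)) : Prop :=
  (∀ c ∈ d, c.1 < c.2 ∧ c.2 ≤ n) ∧
  (∀ c ∈ d, ∀ c' ∈ d, ¬ Crosses ε c c') ∧
  (chordGraph d).IsAcyclic

/-- The family `c` is a strand diagram (pairwise-noncrossing chords forming a forest). -/
def IsDiagramF {k : ℕ} (ε : ℕ → Bool) (c : Fin k → ℕ × ℕ) : Prop :=
  (∀ a b : Fin k, ¬ Crosses ε (c a) (c b)) ∧ (chordGraphF c).IsAcyclic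

/-- The partial order of the poset `P_d`: `x ≤ y` iff there is a chain of chords of `d`
from `x` to `y` in which each chord shares an endpoint with, and is clockwise from,
the previous one. -/
def leD (ε : ℕ → Bool) (d : Finset (ℕ × ℕ)) : ℕ × ℕ → ℕ × ℕ → Prop :=
  Relation.ReflTransGen (fun x y => x ∈ d ∧ y ∈ d ∧ SharesEndpoint x y ∧ Cw ε y x)

/-- The finpartition `π` of `{1,…,n+1}` is noncrossing. -/
def NoncrossingPart (n : ℕ) (π : Finpartition (Finset.Icc 1 (n + 1) : Finset ℕ)) : Prop :=
  ¬ ∃ a b c d : ℕ, a < b ∧ b < c ∧ c < d ∧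
      ∃ B1 ∈ π.parts, ∃ B2 ∈ π.parts, B1 ≠ B2 ∧ a ∈ B1 ∧ c ∈ B1 ∧ b ∈ B2 ∧ d ∈ B2

/-- `π'` is obtained from `π` by merging the (distinct) blocks containing `x` and `y`. -/
def MergeAt (n : ℕ) (π π' : Finpartition (Finset.Icc 1 (n + 1) : Finset ℕ))
    (x y : ℕ) : Prop :=
  ∃ B1 ∈ π.parts, ∃ B2 ∈ π.parts, B1 ≠ B2 ∧ x ∈ B1 ∧ y ∈ B2 ∧
    π'.parts = insert (B1 ∪ B2) ((π.parts.erase B1).erase B2)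

/-- `π'` is obtained from `π` by replacing two distinct blocks by their union. -/
def IsMergeStep (n : ℕ) (π π' : Finpartition (Finset.Icc 1 (n + 1) : Finset ℕ)) : Prop :=
  ∃ B1 ∈ π.parts, ∃ B2 ∈ π.parts, B1 ≠ B2 ∧
    π'.parts = insert (B1 ∪ B2) ((π.parts.erase B1).erase B2)

/-!
The blocks of `π_{s+1}`, shifted down by one, are the connected components of the graph formed by
the chords labeled `1, …, s`. When the classes of a noncrossing relation are already connected by
chords, the noncrossing condition and the clockwise rule leave exactly one chord that may be drawn
next in order to unite two given classes: if the class `B` has its minimum to the right of the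
minimum of the class `A`, it joins the last point of `A` before `B` to the maximum of `B`.
Conversely, a sequence of chords chosen in this way along a chain of noncrossing relations does not
cross itself, is a forest and is labeled well. Hence a chain determines its diagram, chord by chord.
-/

section JoinClasses

variable {α : Type*}

/-- The equivalence relation obtained from `r` by uniting the classes of `x` and `y`. It describes
both a merge of two blocks and the effect of a new edge on connected components. -/
def joinClasses (r : Setoid α) (x y : α) : Setoid α where
  r u v := r u v ∨ (r u x ∧ r y v) ∨ (r u y ∧ r x v)
  iseqv :=
    { refl := fun u => .inl (r.refl u)
      symm := by
        rintro u v (h | ⟨hu, hv⟩ | ⟨hu, hv⟩)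
        · exact .inl (r.symm h)
        · exact .inr (.inr ⟨r.symm hv, r.symm hu⟩)
        · exact .inr (.inl ⟨r.symm hv, r.symm hu⟩)
      trans := by
        have := @r.symm'; have := @r.trans'
        grind }

variable {r : Setoid α} {u v x y x' y' : α}

lemma joinClasses_rel :
    joinClasses r x y u v ↔ r u v ∨ (r u x ∧ r y v) ∨ (r u y ∧ r x v) :=
  Iff.rfl

lemma joinClasses_of_rel (h : r u v) : joinClasses r x y u v :=
  .inl h

lemma joinClasses_left_right (r : Setoid α) (x y : α) : joinClasses r x y x y :=
  .inr (.inl ⟨r.refl x, r.refl y⟩)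

lemma joinClasses_comm (r : Setoid α) (x y : α) : joinClasses r x y = joinClasses r y x :=
  Setoid.ext fun u v => by simp only [joinClasses_rel, or_comm]

lemma joinClasses_congr (hx : r x x') (hy : r y y') : joinClasses r x y = joinClasses r x' y' :=
  Setoid.ext fun u v => by
    have := @r.symm'; have := @r.trans'
    rw [joinClasses_rel, joinClasses_rel]
    grind

end JoinClasses

section MergingChord

variable {α : Type*} [LinearOrder α]

/-- An equivalence relation on a linear order is noncrossing if no two of its classes interlace. -/
def IsNoncrossing (r : Setoid α) : Prop :=
  ∀ ⦃a b c d : α⦄, a < b → b < c → c < d → r a c → r b d → r a b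

/-- `e` is the canonical chord uniting two classes of `r`: it runs from the point of the outer class
nearest on the left of the inner class to the largest point of the inner class. In a good-labeled
diagram these are exactly the chords that may be drawn once the classes of `r` are connected. -/
structure IsMergingChord (r : Setoid α) (e : α × α) : Prop where
  notMem_Ioo : ∀ ⦃z⦄, r e.1 z → z ∉ Set.Ioo e.1 e.2
  mem_Ioc : ∀ ⦃z⦄, r e.2 z → z ∈ Set.Ioc e.1 e.2

variable {r : Setoid α} {e e' : α × α} {x y : α}

lemma IsMergingChord.lt (he : IsMergingChord r e) : e.1 < e.2 :=
  (he.mem_Ioc (r.refl _)).1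

lemma IsMergingChord.not_rel (he : IsMergingChord r e) : ¬ r e.1 e.2 :=
  fun h => lt_irrefl _ (he.mem_Ioc (r.symm h)).1

lemma IsMergingChord.eq_of_joinClasses_eq (he : IsMergingChord r e) (he' : IsMergingChord r e')
    (h : joinClasses r e.1 e.2 = joinClasses r e'.1 e'.2) : e = e' := by
  have hrel : joinClasses r e'.1 e'.2 e.1 e.2 := h ▸ joinClasses_left_right r e.1 e.2
  rcases hrel with hrel | ⟨hfst, hsnd⟩ | ⟨hfst, hsnd⟩
  · exact absurd hrel he.not_rel
  · have hfst_le := he'.notMem_Ioo (r.symm hfst)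
    have hfst_ge := he.notMem_Ioo hfst
    have hsnd_le := he'.mem_Ioc hsnd
    have hsnd_ge := he.mem_Ioc (r.symm hsnd)
    simp only [Set.mem_Ioo, Set.mem_Ioc] at *
    ext <;> grind
  · exact absurd (he.mem_Ioc (r.symm hsnd)).1 (he'.mem_Ioc (r.symm hfst)).1.asymm

lemma IsMergingChord.not_interlace (he : IsMergingChord r e)
    (hnc : IsNoncrossing (joinClasses r e.1 e.2)) {u v : α} (huv : r u v) :
    ¬ (u < e.1 ∧ e.1 < v ∧ v < e.2) ∧ ¬ (e.1 < u ∧ u < e.2 ∧ e.2 < v) := by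
  have hjoin := joinClasses_left_right r e.1 e.2
  constructor
  · rintro ⟨hu, hv, hv'⟩
    rcases hnc hu hv hv' (joinClasses_of_rel huv) hjoin with h | ⟨-, h⟩ | ⟨h, -⟩
    · exact he.notMem_Ioo (r.trans (r.symm h) huv) ⟨hv, hv'⟩
    · exact he.not_rel (r.symm h)
    · exact (he.mem_Ioc (r.symm h)).1.asymm hu
  · rintro ⟨hu, hu', hv⟩
    rcases hnc hu hu' hv hjoin (joinClasses_of_rel huv) with h | ⟨-, h⟩ | ⟨h, -⟩
    · exact he.notMem_Ioo h ⟨hu, hu'⟩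
    · exact (he.mem_Ioc (r.trans h huv)).2.not_gt hv
    · exact he.not_rel h

lemma exists_isMergingChord_of_lt (hr : IsNoncrossing r) (hfin : ∀ z, {w | r z w}.Finite)
    (hxy : ¬ r x y) (hlt : x < y) (hmin : ∀ z, r y z → y ≤ z) :
    ∃ e, IsMergingChord r e ∧ r x e.1 ∧ r y e.2 := by
  obtain ⟨a, ⟨hxa, hay⟩, ha⟩ := Set.exists_max_image {z | r x z ∧ z < y} id
    ((hfin x).subset fun _ h => h.1) ⟨x, r.refl x, hlt⟩
  obtain ⟨b, hyb, hb⟩ := Set.exists_max_image {z | r y z} id (hfin y) ⟨y, r.refl y⟩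
  refine ⟨(a, b), ⟨fun z haz hz => ?_, fun z hbz => ?_⟩, hxa, hyb⟩
  · have hxz : r x z := r.trans hxa haz
    have hyz : y < z := by
      refine lt_of_le_of_ne (not_lt.1 fun h => (ha z ⟨hxz, h⟩).not_gt hz.1) ?_
      rintro rfl
      exact hxy hxz
    exact hxy (r.trans hxa (hr hay hyz hz.2 haz hyb))
  · have hyz : r y z := r.trans hyb hbz
    exact ⟨hay.trans_le (hmin z hyz), hb z hyz⟩

lemma exists_isMergingChord (hr : IsNoncrossing r) (hfin : ∀ z, {w | r z w}.Finite)
    (hxy : ¬ r x y) :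
    ∃ e, IsMergingChord r e ∧ joinClasses r e.1 e.2 = joinClasses r x y := by
  have exists_least (z : α) : ∃ m, r z m ∧ ∀ w, r m w → m ≤ w := by
    obtain ⟨m, hzm, hm⟩ := Set.exists_min_image {w | r z w} id (hfin z) ⟨z, r.refl z⟩
    exact ⟨m, hzm, fun w hmw => hm w (r.trans hzm hmw)⟩
  obtain ⟨a, hxa, ha⟩ := exists_least x
  obtain ⟨b, hyb, hb⟩ := exists_least y
  have hab : ¬ r a b := fun h => hxy (r.trans hxa (r.trans h (r.symm hyb)))
  rw [joinClasses_congr hxa hyb]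
  rcases lt_trichotomy a b with hlt | rfl | hlt
  · obtain ⟨e, he, hae, hbe⟩ := exists_isMergingChord_of_lt hr hfin hab hlt hb
    exact ⟨e, he, (joinClasses_congr hae hbe).symm⟩
  · exact absurd (r.refl a) hab
  · obtain ⟨e, he, hbe, hae⟩ := exists_isMergingChord_of_lt hr hfin (fun h => hab (r.symm h)) hlt ha
    exact ⟨e, he, by rw [joinClasses_comm r a, joinClasses_congr hbe hae]⟩

lemma existsUnique_isMergingChord (hr : IsNoncrossing r) (hfin : ∀ z, {w | r z w}.Finite)
    (hxy : ¬ r x y) :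
    ∃! e, IsMergingChord r e ∧ joinClasses r e.1 e.2 = joinClasses r x y := by
  obtain ⟨e, he, hjoin⟩ := exists_isMergingChord hr hfin hxy
  exact ⟨e, ⟨he, hjoin⟩, fun e' he' => he'.1.eq_of_joinClasses_eq he (he'.2.trans hjoin.symm)⟩

end MergingChord

section BlockSetoid

/-- The partition obtained from `π` by replacing its blocks `A` and `B` by their union. -/
def mergeBlocks {α : Type*} [DecidableEq α] {s : Finset α} (π : Finpartition s) {A B : Finset α}
    (hA : A ∈ π.parts) (hB : B ∈ π.parts) : Finpartition s :=
  Finpartition.ofExistsUnique (insert (A ∪ B) ((π.parts.erase A).erase B))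
    (by
      have := @π.subset
      grind)
    (fun a ha => by
      obtain ⟨C, hC, haC⟩ := π.exists_mem ha
      have hdisj := @π.eq_of_mem_parts
      by_cases haAB : a ∈ A ∪ B
      · exact ⟨A ∪ B, by grind, by grind⟩
      · exact ⟨C, by grind, by grind⟩)
    (by
      have := π.nonempty_of_mem_parts hA; have := π.empty_notMem_parts
      grind [Finset.union_eq_empty])

variable {n : ℕ}

/-- The equivalence relation of `π`, transported from `{1, …, n + 1}` to the vertices
`{0, …, n}` of the chords. Every number above `n` is a class by itself, so that the relation can be
compared with reachability in graphs on `ℕ`. -/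
def blockSetoid (π : Finpartition (Finset.Icc 1 (n + 1))) : Setoid ℕ where
  r u v := u = v ∨ ∃ B ∈ π.parts, u + 1 ∈ B ∧ v + 1 ∈ B
  iseqv :=
    { refl := fun _ => .inl rfl
      symm := by grind
      trans := by
        have := @π.eq_of_mem_parts
        grind }

variable {π π' : Finpartition (Finset.Icc 1 (n + 1))} {u v x y : ℕ} {A B : Finset ℕ}

lemma blockSetoid_rel :
    blockSetoid π u v ↔ u = v ∨ ∃ B ∈ π.parts, u + 1 ∈ B ∧ v + 1 ∈ B :=
  Iff.rfl

lemma blockSetoid_rel_iff_mem (hB : B ∈ π.parts) (hu : u + 1 ∈ B) :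
    blockSetoid π u v ↔ v + 1 ∈ B := by
  have := @π.eq_of_mem_parts
  rw [blockSetoid_rel]
  grind

lemma blockSetoid_rel_iff_mem' (hB : B ∈ π.parts) (hv : v + 1 ∈ B) :
    blockSetoid π u v ↔ u + 1 ∈ B :=
  (blockSetoid π).comm'.trans (blockSetoid_rel_iff_mem hB hv)

lemma exists_eq_add_one_of_mem_part (hB : B ∈ π.parts) (hx : x ∈ B) : ∃ u ≤ n, x = u + 1 := by
  have := Finset.mem_Icc.1 (π.subset hB hx)
  exact ⟨x - 1, by omega, by omega⟩

lemma le_of_blockSetoid_rel (h : blockSetoid π u v) (hne : u ≠ v) : u ≤ n ∧ v ≤ n := by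
  obtain ⟨B, hB, hu, hv⟩ := h.resolve_left hne
  have := Finset.mem_Icc.1 (π.subset hB hu)
  have := Finset.mem_Icc.1 (π.subset hB hv)
  omega

lemma blockSetoid_class_finite (π : Finpartition (Finset.Icc 1 (n + 1))) (u : ℕ) :
    {v | blockSetoid π u v}.Finite := by
  refine (Set.finite_Iic (max u n)).subset fun v hv => ?_
  rcases eq_or_ne u v with rfl | hne
  · exact le_max_left u n
  · exact (le_of_blockSetoid_rel hv hne).2.trans (le_max_right u n)

lemma le_of_blockSetoid_le (h : blockSetoid π ≤ blockSetoid π') : π ≤ π' := by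
  intro B hB
  obtain ⟨x, hx⟩ := π.nonempty_of_mem_parts hB
  obtain ⟨C, hC, hxC⟩ := π'.exists_mem (π.subset hB hx)
  obtain ⟨u, -, rfl⟩ := exists_eq_add_one_of_mem_part hB hx
  refine ⟨C, hC, fun y hy => ?_⟩
  obtain ⟨v, -, rfl⟩ := exists_eq_add_one_of_mem_part hB hy
  exact (blockSetoid_rel_iff_mem hC hxC).1 (h ((blockSetoid_rel_iff_mem hB hx).2 hy))

lemma blockSetoid_injective :
    Function.Injective (blockSetoid : Finpartition (Finset.Icc 1 (n + 1)) → Setoid ℕ) :=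
  fun _ _ h => le_antisymm (le_of_blockSetoid_le h.le) (le_of_blockSetoid_le h.ge)

lemma exists_blockSetoid_eq {r : Setoid ℕ} (hr : ∀ u v, r u v → u = v ∨ (u ≤ n ∧ v ≤ n)) :
    ∃ π : Finpartition (Finset.Icc 1 (n + 1)), blockSetoid π = r := by
  classical
  refine ⟨Finpartition.ofSetSetoid (r.comap Nat.pred) _, Setoid.ext fun u v => ?_⟩
  simp only [blockSetoid_rel, ← Finpartition.mem_part_iff_exists,
    Finpartition.mem_part_ofSetSetoid_iff_rel, Setoid.comap_rel, Finset.mem_Icc, Nat.pred_succ]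
  constructor
  · rintro (rfl | ⟨-, -, h⟩)
    exacts [r.refl u, r.symm h]
  · intro h
    rcases hr u v h with rfl | ⟨hu, hv⟩
    exacts [.inl rfl, .inr ⟨by omega, by omega, r.symm h⟩]

lemma blockSetoid_eq_bot
    (h : π.parts = (Finset.Icc 1 (n + 1)).image fun a => ({a} : Finset ℕ)) :
    blockSetoid π = ⊥ :=
  Setoid.ext fun u v => by
    rw [blockSetoid_rel, h, Setoid.bot_def]
    grind

lemma parts_eq_image_singleton (h : blockSetoid π = ⊥) :
    π.parts = (Finset.Icc 1 (n + 1)).image fun a => ({a} : Finset ℕ) := by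
  obtain rfl : π = ⊥ :=
    blockSetoid_injective (h.trans (blockSetoid_eq_bot (by ext; simp)).symm)
  ext
  simp

lemma noncrossingPart_iff : NoncrossingPart n π ↔ IsNoncrossing (blockSetoid π) := by
  constructor
  · rintro h a b c d hab hbc hcd (rfl | ⟨A, hA, ha, hc⟩) (rfl | ⟨B, hB, hb, hd⟩)
    any_goals omega
    by_contra hrel
    refine h ⟨a + 1, b + 1, c + 1, d + 1, by omega, by omega, by omega, A, hA, B, hB, ?_,
      ha, hc, hb, hd⟩
    rintro rfl
    exact hrel ((blockSetoid_rel_iff_mem hA ha).2 hb)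
  · rintro h ⟨a, b, c, d, hab, hbc, hcd, A, hA, B, hB, hne, ha, hc, hb, hd⟩
    obtain ⟨a, -, rfl⟩ := exists_eq_add_one_of_mem_part hA ha
    obtain ⟨b, -, rfl⟩ := exists_eq_add_one_of_mem_part hB hb
    obtain ⟨c, -, rfl⟩ := exists_eq_add_one_of_mem_part hA hc
    obtain ⟨d, -, rfl⟩ := exists_eq_add_one_of_mem_part hB hd
    have hrel : blockSetoid π a b := h (by omega) (by omega) (by omega)
      ((blockSetoid_rel_iff_mem hA ha).2 hc) ((blockSetoid_rel_iff_mem hB hb).2 hd)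
    exact hne (π.eq_of_mem_parts hA hB ((blockSetoid_rel_iff_mem hA ha).1 hrel) hb)

lemma blockSetoid_eq_joinClasses_of_parts_eq (hA : A ∈ π.parts) (hB : B ∈ π.parts)
    (hx : x + 1 ∈ A) (hy : y + 1 ∈ B)
    (hparts : π'.parts = insert (A ∪ B) ((π.parts.erase A).erase B)) :
    blockSetoid π' = joinClasses (blockSetoid π) x y :=
  Setoid.ext fun u v => by
    rw [joinClasses_rel, blockSetoid_rel_iff_mem hA hx, blockSetoid_rel_iff_mem hB hy,
      blockSetoid_rel_iff_mem' hA hx, blockSetoid_rel_iff_mem' hB hy, blockSetoid_rel,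
      blockSetoid_rel, hparts]
    have := @π.eq_of_mem_parts
    constructor
    · grind
    · rintro ((rfl | ⟨C, hC, hu, hv⟩) | ⟨hu, hv⟩ | ⟨hu, hv⟩)
      · exact .inl rfl
      · by_cases hCAB : C = A ∨ C = B
        · exact .inr ⟨A ∪ B, by grind, by grind, by grind⟩
        · exact .inr ⟨C, by grind, hu, hv⟩
      all_goals exact .inr ⟨A ∪ B, by grind, by grind, by grind⟩

lemma mergeAt_iff : MergeAt n π π' (x + 1) (y + 1) ↔
    x ≤ n ∧ y ≤ n ∧ ¬ blockSetoid π x y ∧ blockSetoid π' = joinClasses (blockSetoid π) x y := by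
  constructor
  · rintro ⟨A, hA, B, hB, hne, hx, hy, hparts⟩
    refine ⟨by simpa using (Finset.mem_Icc.1 (π.subset hA hx)).2,
      by simpa using (Finset.mem_Icc.1 (π.subset hB hy)).2, fun h => ?_,
      blockSetoid_eq_joinClasses_of_parts_eq hA hB hx hy hparts⟩
    exact hne (π.eq_of_mem_parts hA hB ((blockSetoid_rel_iff_mem hA hx).1 h) hy)
  · rintro ⟨hxn, hyn, hxy, hjoin⟩
    obtain ⟨A, hA, hx⟩ := π.exists_mem (Finset.mem_Icc.2 ⟨by omega, by omega⟩ : x + 1 ∈ _)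
    obtain ⟨B, hB, hy⟩ := π.exists_mem (Finset.mem_Icc.2 ⟨by omega, by omega⟩ : y + 1 ∈ _)
    obtain rfl : π' = mergeBlocks π hA hB := blockSetoid_injective
      (hjoin.trans (blockSetoid_eq_joinClasses_of_parts_eq hA hB hx hy rfl).symm)
    refine ⟨A, hA, B, hB, ?_, hx, hy, rfl⟩
    rintro rfl
    exact hxy ((blockSetoid_rel_iff_mem hA hx).2 hy)

lemma IsMergeStep.exists_mergeAt (h : IsMergeStep n π π') :
    ∃ x y, MergeAt n π π' (x + 1) (y + 1) := by
  obtain ⟨A, hA, B, hB, hne, hparts⟩ := h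
  obtain ⟨x, hx⟩ := π.nonempty_of_mem_parts hA
  obtain ⟨y, hy⟩ := π.nonempty_of_mem_parts hB
  obtain ⟨x, -, rfl⟩ := exists_eq_add_one_of_mem_part hA hx
  obtain ⟨y, -, rfl⟩ := exists_eq_add_one_of_mem_part hB hy
  exact ⟨x, y, A, hA, B, hB, hne, hx, hy, hparts⟩

lemma MergeAt.isMergeStep (h : MergeAt n π π' x y) : IsMergeStep n π π' :=
  let ⟨A, hA, B, hB, hne, _, _, hparts⟩ := h
  ⟨A, hA, B, hB, hne, hparts⟩

end BlockSetoid

section Reachability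

variable {V : Type*} {G : SimpleGraph V} {u v : V}

lemma reachableSetoid_rel : G.reachableSetoid u v ↔ G.Reachable u v :=
  Iff.rfl

lemma reachableSetoid_le {r : Setoid V} (h : ∀ ⦃u v⦄, G.Adj u v → r u v) :
    G.reachableSetoid ≤ r := by
  rintro u v ⟨w⟩
  induction w with
  | nil => exact r.refl _
  | cons hadj _ ih => exact r.trans (h hadj) ih

lemma reachableSetoid_bot : (⊥ : SimpleGraph V).reachableSetoid = ⊥ :=
  Setoid.ext fun _ _ => SimpleGraph.reachable_bot

lemma reachableSetoid_sup_edge (G : SimpleGraph V) (x y : V) :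
    (G ⊔ SimpleGraph.edge x y).reachableSetoid = joinClasses G.reachableSetoid x y := by
  have hle : G ≤ G ⊔ SimpleGraph.edge x y := le_sup_left
  have hxy : (G ⊔ SimpleGraph.edge x y).Reachable x y := by
    rcases eq_or_ne x y with rfl | hne
    · exact .rfl
    · exact SimpleGraph.Adj.reachable (.inr (by simpa [SimpleGraph.edge_adj] using hne))
  refine le_antisymm (reachableSetoid_le fun u v hadj => ?_) fun u v huv => ?_
  · rw [SimpleGraph.sup_adj, SimpleGraph.edge_adj] at hadj
    rcases hadj with hadj | ⟨⟨rfl, rfl⟩ | ⟨rfl, rfl⟩, -⟩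
    · exact joinClasses_of_rel hadj.reachable
    · exact joinClasses_left_right _ _ _
    · exact (joinClasses _ _ _).symm (joinClasses_left_right _ _ _)
  · rcases huv with huv | ⟨hux, hyv⟩ | ⟨huy, hxv⟩
    · exact SimpleGraph.Reachable.mono hle huv
    · exact (hux.mono hle).trans (hxy.trans (hyv.mono hle))
    · exact (huy.mono hle).trans (hxy.symm.trans (hxv.mono hle))

lemma reachable_induction {P : V → Prop} (h : G.Reachable u v) (hu : P u)
    (hstep : ∀ ⦃p q⦄, G.Reachable u p → P p → G.Adj p q → P q) : P v := by
  rw [SimpleGraph.reachable_iff_reflTransGen] at h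
  suffices G.Reachable u v ∧ P v from this.2
  induction h with
  | refl => exact ⟨.rfl, hu⟩
  | tail _ hadj ih => exact ⟨ih.1.trans hadj.reachable, hstep ih.1 ih.2 hadj⟩

variable [LinearOrder V]

lemma mem_Ioo_of_reachable
    (hG : ∀ ⦃a b c d⦄, a < b → b < c → c < d → G.Adj a c → ¬ G.Adj b d) {p q : V}
    (hpq : G.Adj p q) (hu : u ∈ Set.Ioo p q) (hpu : ¬ G.Reachable p u) (huv : G.Reachable u v) :
    v ∈ Set.Ioo p q := by
  refine reachable_induction huv hu fun z w huz hz hzw => ?_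
  have huw := huz.trans hzw.reachable
  have hwp : w ≠ p := by
    rintro rfl
    exact hpu huw.symm
  have hwq : w ≠ q := by
    rintro rfl
    exact hpu (hpq.reachable.trans huw.symm)
  constructor
  · by_contra! hle
    exact hG (hle.lt_of_ne hwp) hz.1 hz.2 hzw.symm hpq
  · by_contra! hle
    exact hG hz.1 hz.2 (hle.lt_of_ne' hwq) hpq hzw

lemma isNoncrossing_reachableSetoid
    (hG : ∀ ⦃a b c d⦄, a < b → b < c → c < d → G.Adj a c → ¬ G.Adj b d) :
    IsNoncrossing G.reachableSetoid := by
  intro a b c d hab hbc hcd hac hbd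
  rw [reachableSetoid_rel] at hac hbd ⊢
  by_contra hnab
  -- A walk from `a` to `c` has an edge entering `(b, d)` from outside. This edge separates `b` from
  -- `d`, so no walk from `b` to `d` can avoid crossing it.
  suffices c ∉ Set.Ioo b d from this ⟨hbc, hcd⟩
  refine reachable_induction (P := (· ∉ Set.Ioo b d)) hac (fun ha => ha.1.asymm hab)
    fun p q hap hp hpq hq => ?_
  have hpb : ¬ G.Reachable p b := fun h => hnab (hap.trans h)
  have hqd : ¬ G.Reachable q d := fun h => hpb (hpq.reachable.trans (h.trans hbd.symm))
  rcases lt_or_ge b p with hlt | hle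
  · have hdp : d < p := by
      refine lt_of_le_of_ne (not_lt.1 fun h => hp ⟨hlt, h⟩) ?_
      rintro rfl
      exact hpb hbd.symm
    exact (mem_Ioo_of_reachable hG hpq.symm ⟨hq.2, hdp⟩ hqd hbd.symm).1.asymm hq.1
  · have hpb' : p < b := by
      refine lt_of_le_of_ne hle ?_
      rintro rfl
      exact hpb .rfl
    exact (mem_Ioo_of_reachable hG hpq ⟨hpb', hq.1⟩ hpb hbd).2.asymm hq.2

end Reachability

section Chords

variable {c d e : ℕ × ℕ} {r : Setoid ℕ} {G : SimpleGraph ℕ}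

lemma crosses_false_iff : Crosses (fun _ => false) c d ↔
    (c.1 < d.1 ∧ d.1 < c.2 ∧ c.2 < d.2) ∨ (d.1 < c.1 ∧ c.1 < d.2 ∧ d.2 < c.2) := by
  simp [Crosses]

lemma cw_false_iff : Cw (fun _ => false) c d ↔
    d.2 = c.1 ∨ (c.1 = d.1 ∧ c.2 < d.2) ∨ (c.2 = d.2 ∧ c.1 < d.1) := by
  simp [Cw]

lemma Crosses.symm {ε : ℕ → Bool} (h : Crosses ε c d) : Crosses ε d c := by
  unfold Crosses at *
  tauto

lemma Cw.sharesEndpoint {ε : ℕ → Bool} (h : Cw ε c d) : SharesEndpoint c d := by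
  unfold Cw at h
  unfold SharesEndpoint
  tauto

lemma IsMergingChord.not_crosses (he : IsMergingChord r e)
    (hnc : IsNoncrossing (joinClasses r e.1 e.2)) (hd : r d.1 d.2) :
    ¬ Crosses (fun _ => false) d e := by
  rw [crosses_false_iff]
  exact not_or.2 (he.not_interlace hnc hd)

lemma IsMergingChord.not_cw (he : IsMergingChord r e) (hlt : d.1 < d.2) (hd : r d.1 d.2) :
    ¬ Cw (fun _ => false) d e := by
  rw [cw_false_iff]
  rintro (heq | ⟨heq, h⟩ | ⟨heq, h⟩)
  · exact (he.mem_Ioc (heq ▸ hd)).2.not_gt (heq ▸ hlt)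
  · exact he.notMem_Ioo (heq ▸ hd) ⟨heq ▸ hlt, h⟩
  · exact (he.mem_Ioc (heq ▸ r.symm hd)).1.asymm h

lemma isMergingChord_reachableSetoid (hlt : e.1 < e.2)
    (hcross : ∀ ⦃p q⦄, p < q → G.Adj p q → ¬ Crosses (fun _ => false) (p, q) e)
    (hcw : ∀ ⦃p q⦄, p < q → G.Adj p q → ¬ Cw (fun _ => false) (p, q) e)
    (hreach : ¬ G.Reachable e.1 e.2) : IsMergingChord G.reachableSetoid e := by
  simp only [crosses_false_iff, cw_false_iff] at hcross hcw
  constructor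
  · refine fun z hz => reachable_induction (P := (· ∉ Set.Ioo e.1 e.2)) hz (fun h => h.1.false)
      fun p q hp hpe hpq hqe => ?_
    have hpne : p ≠ e.2 := by
      rintro rfl
      exact hreach hp
    rw [Set.mem_Ioo] at hpe hqe
    rcases hpq.ne.lt_or_gt with h | h
    · have := hcross h hpq; have := hcw h hpq
      omega
    · have := hcross h hpq.symm; have := hcw h hpq.symm
      omega
  · refine fun z hz => reachable_induction hz ⟨hlt, le_rfl⟩ fun p q hp hpe hpq => ?_
    have hqne : q ≠ e.1 := by
      rintro rfl
      exact hreach (hp.trans hpq.reachable).symm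
    rw [Set.mem_Ioc] at hpe ⊢
    rcases hpq.ne.lt_or_gt with h | h
    · have := hcross h hpq; have := hcw h hpq
      omega
    · have := hcross h hpq.symm; have := hcw h hpq.symm
      omega

end Chords

section PrefixGraph

variable {V : Type*} {k : ℕ}

/-- The graph whose edges are the first `s` chords of the family `c`. -/
def prefixGraph (c : Fin k → V × V) (s : Fin (k + 1)) : SimpleGraph V :=
  SimpleGraph.fromEdgeSet {e | ∃ a : Fin k, a.castSucc < s ∧ e = s((c a).1, (c a).2)}

lemma prefixGraph_zero (c : Fin k → V × V) : prefixGraph c 0 = ⊥ := by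
  simp [prefixGraph]

lemma prefixGraph_last (c : Fin k → ℕ × ℕ) : prefixGraph c (Fin.last k) = chordGraphF c := by
  simp [prefixGraph, chordGraphF, Fin.castSucc_lt_last]

lemma prefixGraph_succ (c : Fin k → V × V) (a : Fin k) :
    prefixGraph c a.succ = prefixGraph c a.castSucc ⊔ SimpleGraph.edge (c a).1 (c a).2 := by
  rw [prefixGraph, prefixGraph, SimpleGraph.edge, ← SimpleGraph.fromEdgeSet_union]
  congr 1
  ext e
  simp only [Fin.castSucc_lt_succ_iff, Fin.castSucc_lt_castSucc_iff, le_iff_lt_or_eq, or_and_right,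
    exists_or, exists_eq_left, Set.mem_ofPred_eq, Set.mem_union, Set.mem_singleton_iff]

lemma prefixGraph_mono (c : Fin k → V × V) : Monotone (prefixGraph c) :=
  fun _ _ hst => SimpleGraph.fromEdgeSet_mono fun _ ⟨a, ha, he⟩ => ⟨a, ha.trans_le hst, he⟩

lemma reachableSetoid_prefixGraph_succ (c : Fin k → V × V) (a : Fin k) :
    (prefixGraph c a.succ).reachableSetoid =
      joinClasses (prefixGraph c a.castSucc).reachableSetoid (c a).1 (c a).2 := by
  rw [prefixGraph_succ, reachableSetoid_sup_edge]

lemma reachable_prefixGraph (c : Fin k → V × V) {a : Fin k} {s : Fin (k + 1)}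
    (has : a.castSucc < s) : (prefixGraph c s).Reachable (c a).1 (c a).2 := by
  rcases eq_or_ne (c a).1 (c a).2 with heq | hne
  · rw [heq]
  · exact SimpleGraph.Adj.reachable ((SimpleGraph.fromEdgeSet_adj _).2 ⟨⟨a, has, rfl⟩, hne⟩)

lemma exists_of_prefixGraph_adj [LinearOrder V] {c : Fin k → V × V} (hlt : ∀ a, (c a).1 < (c a).2)
    {s : Fin (k + 1)} {p q : V} (hpq : p < q) (h : (prefixGraph c s).Adj p q) :
    ∃ a, a.castSucc < s ∧ c a = (p, q) := by
  obtain ⟨⟨a, has, he⟩, -⟩ := (SimpleGraph.fromEdgeSet_adj _).1 h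
  rcases Sym2.eq_iff.1 he with ⟨rfl, rfl⟩ | ⟨rfl, rfl⟩
  · exact ⟨a, has, rfl⟩
  · exact absurd hpq (hlt a).asymm

lemma injective_of_not_reachable {c : Fin k → V × V}
    (h : ∀ a, ¬ (prefixGraph c a.castSucc).Reachable (c a).1 (c a).2) :
    Function.Injective c := by
  have hne {a b : Fin k} (hab : a < b) : c a ≠ c b := fun heq =>
    h b (heq ▸ reachable_prefixGraph c (Fin.castSucc_lt_castSucc_iff.2 hab))
  intro a b hab
  by_contra! hab'
  rcases hab'.lt_or_gt with hlt | hlt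
  · exact hne hlt hab
  · exact hne hlt hab.symm

lemma isAcyclic_prefixGraph {c : Fin k → V × V}
    (h : ∀ a, ¬ (prefixGraph c a.castSucc).Reachable (c a).1 (c a).2) (s : Fin (k + 1)) :
    (prefixGraph c s).IsAcyclic := by
  induction s using Fin.induction with
  | zero => exact prefixGraph_zero c ▸ SimpleGraph.isAcyclic_bot
  | succ a ih => exact prefixGraph_succ c a ▸ ih.sup_edge_of_not_reachable (h a)

lemma not_reachable_prefixGraph [LinearOrder V] {c : Fin k → V × V}
    (hlt : ∀ a, (c a).1 < (c a).2) (hinj : Function.Injective c)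
    (hacyc : (prefixGraph c (Fin.last k)).IsAcyclic) (a : Fin k) :
    ¬ (prefixGraph c a.castSucc).Reachable (c a).1 (c a).2 := by
  intro hreach
  have hsucc := hacyc.anti (prefixGraph_mono c (Fin.le_last a.succ))
  rw [prefixGraph_succ, SimpleGraph.isAcyclic_sup_fromEdgeSet_iff] at hsucc
  rcases hsucc.2 hreach with heq | hadj
  · exact (hlt a).ne heq
  · obtain ⟨b, hba, hb⟩ := exists_of_prefixGraph_adj hlt (hlt a) hadj
    exact (Fin.castSucc_lt_castSucc_iff.1 hba).ne (hinj hb)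

end PrefixGraph

section GoodLabelings

variable {n k : ℕ} {c : Fin k → ℕ × ℕ}
  {π : Fin (k + 1) → Finpartition (Finset.Icc 1 (n + 1))}

/-- `c` is a strand diagram on `{0, …, n}` with a good labeling, `c a` being the chord labeled
`a + 1`. -/
def IsGoodLabeledDiagram (n : ℕ) (c : Fin k → ℕ × ℕ) : Prop :=
  (∀ a, (c a).1 < (c a).2 ∧ (c a).2 ≤ n) ∧ Function.Injective c ∧
    IsDiagramF (fun _ => false) c ∧
    ∀ a b : Fin k, SharesEndpoint (c a) (c b) → Cw (fun _ => false) (c a) (c b) → b < a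

/-- `π` is a chain of noncrossing partitions of `{1, …, n + 1}` which starts at the partition into
singletons and unites two blocks at each step. -/
def IsNoncrossingChain (n : ℕ) (π : Fin (k + 1) → Finpartition (Finset.Icc 1 (n + 1))) : Prop :=
  (π 0).parts = (Finset.Icc 1 (n + 1)).image (fun a => ({a} : Finset ℕ)) ∧
    (∀ s, NoncrossingPart n (π s)) ∧
    ∀ a : Fin k, IsMergeStep n (π a.castSucc) (π a.succ)

lemma IsGoodLabeledDiagram.not_reachable (hc : IsGoodLabeledDiagram n c) (a : Fin k) :
    ¬ (prefixGraph c a.castSucc).Reachable (c a).1 (c a).2 :=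
  let ⟨hbound, hinj, ⟨_, hacyc⟩, _⟩ := hc
  not_reachable_prefixGraph (fun a => (hbound a).1) hinj (prefixGraph_last c ▸ hacyc) a

lemma IsGoodLabeledDiagram.isNoncrossing (hc : IsGoodLabeledDiagram n c) (s : Fin (k + 1)) :
    IsNoncrossing (prefixGraph c s).reachableSetoid := by
  obtain ⟨hbound, -, ⟨hcross, -⟩, -⟩ := hc
  have hlt a := (hbound a).1
  refine isNoncrossing_reachableSetoid fun p q u v hpq hqu huv hpu hqv => ?_
  obtain ⟨a, -, ha⟩ := exists_of_prefixGraph_adj hlt (hpq.trans hqu) hpu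
  obtain ⟨b, -, hb⟩ := exists_of_prefixGraph_adj hlt (hqu.trans huv) hqv
  refine hcross a b (crosses_false_iff.2 (.inl ?_))
  rw [ha, hb]
  exact ⟨hpq, hqu, huv⟩

lemma IsGoodLabeledDiagram.isMergingChord (hc : IsGoodLabeledDiagram n c) (a : Fin k) :
    IsMergingChord (prefixGraph c a.castSucc).reachableSetoid (c a) := by
  have hreach := hc.not_reachable a
  obtain ⟨hbound, -, ⟨hcross, -⟩, hlabel⟩ := hc
  have hlt a := (hbound a).1
  refine isMergingChord_reachableSetoid (hlt a) (fun p q hpq hadj => ?_)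
    (fun p q hpq hadj hcw => ?_) hreach
  · obtain ⟨b, -, hb⟩ := exists_of_prefixGraph_adj hlt hpq hadj
    exact hb ▸ hcross b a
  · obtain ⟨b, hba, hb⟩ := exists_of_prefixGraph_adj hlt hpq hadj
    rw [← hb] at hcw
    exact (hlabel b a hcw.sharesEndpoint hcw).asymm (Fin.castSucc_lt_castSucc_iff.1 hba)

lemma isGoodLabeledDiagram_of_isMergingChord (hbound : ∀ a, (c a).2 ≤ n)
    (hnc : ∀ s, IsNoncrossing (prefixGraph c s).reachableSetoid)
    (hmerge : ∀ a, IsMergingChord (prefixGraph c a.castSucc).reachableSetoid (c a)) :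
    IsGoodLabeledDiagram n c := by
  have hlt a := (hmerge a).lt
  have hnotreach a : ¬ (prefixGraph c a.castSucc).Reachable (c a).1 (c a).2 := (hmerge a).not_rel
  have hreach {a b : Fin k} (hab : a < b) :=
    reachable_prefixGraph c (Fin.castSucc_lt_castSucc_iff.2 hab)
  have hcross {a b : Fin k} (hab : a < b) : ¬ Crosses (fun _ => false) (c a) (c b) :=
    (hmerge b).not_crosses (reachableSetoid_prefixGraph_succ c b ▸ hnc b.succ) (hreach hab)
  have hcw {a b : Fin k} (hab : a < b) : ¬ Cw (fun _ => false) (c a) (c b) :=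
    (hmerge b).not_cw (hlt a) (hreach hab)
  refine ⟨fun a => ⟨hlt a, hbound a⟩, injective_of_not_reachable hnotreach,
    ⟨fun a b => ?_, prefixGraph_last c ▸ isAcyclic_prefixGraph hnotreach _⟩, fun a b _ h => ?_⟩
  · rcases lt_trichotomy a b with hab | rfl | hab
    · exact hcross hab
    · simp [crosses_false_iff]
    · exact fun h => hcross hab h.symm
  · by_contra! hab
    rcases hab.lt_or_eq with hab | rfl
    · exact hcw hab h
    · simp [cw_false_iff, (hlt a).ne'] at h

lemma eq_or_le_of_prefixGraph_reachable (hbound : ∀ a, (c a).1 ≤ n ∧ (c a).2 ≤ n) {s : Fin (k + 1)}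
    {u v : ℕ} (h : (prefixGraph c s).Reachable u v) : u = v ∨ (u ≤ n ∧ v ≤ n) := by
  refine reachable_induction (P := fun v => u = v ∨ (u ≤ n ∧ v ≤ n)) h (.inl rfl)
    fun p q _ hup hpq => ?_
  obtain ⟨⟨a, -, ha⟩, -⟩ := (SimpleGraph.fromEdgeSet_adj _).1 hpq
  have := hbound a
  rw [Sym2.eq_iff] at ha
  omega

lemma blockSetoid_eq_reachableSetoid
    (hzero : (π 0).parts = (Finset.Icc 1 (n + 1)).image (fun a => ({a} : Finset ℕ)))
    (hmerge : ∀ a, MergeAt n (π a.castSucc) (π a.succ) ((c a).1 + 1) ((c a).2 + 1))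
    (s : Fin (k + 1)) : blockSetoid (π s) = (prefixGraph c s).reachableSetoid := by
  induction s using Fin.induction with
  | zero => rw [blockSetoid_eq_bot hzero, prefixGraph_zero, reachableSetoid_bot]
  | succ a ih => rw [(mergeAt_iff.1 (hmerge a)).2.2.2, ih, reachableSetoid_prefixGraph_succ]

lemma IsGoodLabeledDiagram.existsUnique_chain (hc : IsGoodLabeledDiagram n c) :
    ∃! π : Fin (k + 1) → Finpartition (Finset.Icc 1 (n + 1)), IsNoncrossingChain n π ∧
      ∀ a, MergeAt n (π a.castSucc) (π a.succ) ((c a).1 + 1) ((c a).2 + 1) := by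
  have hbound a : (c a).1 ≤ n ∧ (c a).2 ≤ n := ⟨(hc.1 a).1.le.trans (hc.1 a).2, (hc.1 a).2⟩
  choose π hπ using fun s : Fin (k + 1) =>
    exists_blockSetoid_eq (n := n) (r := (prefixGraph c s).reachableSetoid)
      fun _ _ => eq_or_le_of_prefixGraph_reachable hbound
  have hmerge a : MergeAt n (π a.castSucc) (π a.succ) ((c a).1 + 1) ((c a).2 + 1) := by
    rw [mergeAt_iff, hπ, hπ]
    exact ⟨(hbound a).1, (hbound a).2, hc.not_reachable a, reachableSetoid_prefixGraph_succ c a⟩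
  have hzero : blockSetoid (π 0) = ⊥ := by
    rw [hπ, prefixGraph_zero, reachableSetoid_bot]
  refine ⟨π, ⟨⟨parts_eq_image_singleton hzero, fun s => ?_, fun a => (hmerge a).isMergeStep⟩,
    hmerge⟩, fun π' hπ' => funext fun s => blockSetoid_injective ?_⟩
  · rw [noncrossingPart_iff, hπ]
    exact hc.isNoncrossing s
  · rw [blockSetoid_eq_reachableSetoid hπ'.1.1 hπ'.2, hπ]

lemma existsUnique_isMergingChord_mergeAt {π π' : Finpartition (Finset.Icc 1 (n + 1))}
    (hnc : NoncrossingPart n π) (hstep : IsMergeStep n π π') :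
    ∃! e : ℕ × ℕ, IsMergingChord (blockSetoid π) e ∧ MergeAt n π π' (e.1 + 1) (e.2 + 1) := by
  obtain ⟨x, y, hxy⟩ := hstep.exists_mergeAt
  obtain ⟨-, -, hnot, hjoin⟩ := mergeAt_iff.1 hxy
  have mergeAt_iff_joinClasses (e : ℕ × ℕ) (he : IsMergingChord (blockSetoid π) e) :
      MergeAt n π π' (e.1 + 1) (e.2 + 1) ↔
        joinClasses (blockSetoid π) e.1 e.2 = joinClasses (blockSetoid π) x y := by
    rw [mergeAt_iff, hjoin]
    refine ⟨fun h => h.2.2.2.symm, fun h => ?_⟩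
    have hrel : blockSetoid π' e.1 e.2 := hjoin ▸ h ▸ joinClasses_left_right _ _ _
    obtain ⟨hfst, hsnd⟩ := le_of_blockSetoid_rel hrel he.lt.ne
    exact ⟨hfst, hsnd, he.not_rel, h.symm⟩
  exact (existsUnique_congr fun e => and_congr_right (mergeAt_iff_joinClasses e)).2 <|
    existsUnique_isMergingChord (noncrossingPart_iff.1 hnc) (blockSetoid_class_finite π) hnot

lemma IsNoncrossingChain.existsUnique_diagram (hπ : IsNoncrossingChain n π) :
    ∃! c : Fin k → ℕ × ℕ, IsGoodLabeledDiagram n c ∧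
      ∀ a, MergeAt n (π a.castSucc) (π a.succ) ((c a).1 + 1) ((c a).2 + 1) := by
  obtain ⟨hzero, hnc, hstep⟩ := hπ
  choose c hc hunique using fun a : Fin k =>
    existsUnique_isMergingChord_mergeAt (hnc a.castSucc) (hstep a)
  have hblocks := blockSetoid_eq_reachableSetoid hzero fun a => (hc a).2
  have hgood : IsGoodLabeledDiagram n c := by
    refine isGoodLabeledDiagram_of_isMergingChord (fun a => (mergeAt_iff.1 (hc a).2).2.1)
      (fun s => ?_) fun a => ?_
    · exact hblocks s ▸ noncrossingPart_iff.1 (hnc s)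
    · exact hblocks a.castSucc ▸ (hc a).1
  refine ⟨c, ⟨hgood, fun a => (hc a).2⟩, fun c' hc' => funext fun a => hunique a _ ⟨?_, hc'.2 a⟩⟩
  exact blockSetoid_eq_reachableSetoid hzero hc'.2 a.castSucc ▸ hc'.1.isMergingChord a

end GoodLabelings

/-- Theorem 6.5: for `ε = (−,…,−)`, the map sending a good-labeled strand diagram with `k`
strands (encoded as `c : Fin k → ℕ × ℕ`, where `c ℓ` is the chord with label `ℓ+1`) to the
chain `(π_1,…,π_{k+1})` of noncrossing partitions of `{1,…,n+1}` — `π_1` the partition into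
singletons and `π_{s+1}` obtained from `π_s` by merging the blocks containing `i_s+1` and
`j_s+1` where `(i_s, j_s)` is the chord labeled `s` — is a bijection onto the set of chains
of noncrossing partitions starting at the singleton partition in which each step merges two
distinct blocks. -/
theorem good_labeled_diagrams_biject_with_nc_chains (n k : ℕ) (hn : 1 ≤ n)
    (hk1 : 1 ≤ k) (hkn : k ≤ n) :
    (∀ c : Fin k → ℕ × ℕ,
      ((∀ a, (c a).1 < (c a).2 ∧ (c a).2 ≤ n) ∧ Function.Injective c ∧
        IsDiagramF (fun _ => false) c ∧
        (∀ a b : Fin k, SharesEndpoint (c a) (c b) →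
          Cw (fun _ => false) (c a) (c b) → b < a)) →
      ∃! π : Fin (k + 1) → Finpartition (Finset.Icc 1 (n + 1) : Finset ℕ),
        ((π 0).parts = (Finset.Icc 1 (n + 1)).image (fun a => ({a} : Finset ℕ)) ∧
          (∀ s, NoncrossingPart n (π s)) ∧
          (∀ a : Fin k, IsMergeStep n (π a.castSucc) (π a.succ))) ∧
        (∀ a : Fin k, MergeAt n (π a.castSucc) (π a.succ) ((c a).1 + 1) ((c a).2 + 1))) ∧
    (∀ π : Fin (k + 1) → Finpartition (Finset.Icc 1 (n + 1) : Finset ℕ),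
      ((π 0).parts = (Finset.Icc 1 (n + 1)).image (fun a => ({a} : Finset ℕ)) ∧
        (∀ s, NoncrossingPart n (π s)) ∧
        (∀ a : Fin k, IsMergeStep n (π a.castSucc) (π a.succ))) →
      ∃! c : Fin k → ℕ × ℕ,
        ((∀ a, (c a).1 < (c a).2 ∧ (c a).2 ≤ n) ∧ Function.Injective c ∧
          IsDiagramF (fun _ => false) c ∧
          (∀ a b : Fin k, SharesEndpoint (c a) (c b) →
            Cw (fun _ => false) (c a) (c b) → b < a)) ∧
        (∀ a : Fin k, MergeAt n (π a.castSucc) (π a.succ) ((c a).1 + 1) ((c a).2 + 1))) :=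
  ⟨fun _ hc => IsGoodLabeledDiagram.existsUnique_chain hc,
    fun _ hπ => IsNoncrossingChain.existsUnique_diagram hπ⟩

end ESPaper
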